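/- arXiv:1106.1425 — 4 statements merged into one kernel-verified Lean document; each statement's English description precedes it below -/
import Mathlib

section
/- Let p be a prime and f(x) = p^n + p^m γ₁ x + γ₂ x² + ⋯ + γ_d x^d a polynomial with integer coefficients, where d ≥ 2, γ_d ≠ 0, n ≥ 2, m ≥ 1, p does not divide γ₁, and p does not divide all of γ₂, …, γ_d. If n > 2m, then f has a root ϱ in the ring ℤ_p of p-adic integers; in particular, f is reducible in ℤ_p[x], i.e., f = g·h for polynomials g, h over ℤ_p neither of which is a unit of ℤ_p[x]. -/
/-! The approximate root `0` satisfies Hensel's condition `‖f 0‖ < ‖f' 0‖ ^ 2`, because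
`‖f 0‖ = p ^ (-n)`, `‖f' 0‖ = p ^ (-m)` and `n > 2 * m`. The linear factor given by the
resulting root has a cofactor of positive degree, which cannot be a unit over a domain. -/

open Polynomial

theorem exists_eq_mul_not_isUnit_of_isRoot {R : Type*} [CommRing R] [IsDomain R] {f : R[X]} {a : R}
    (ha : f.IsRoot a) (hdeg : 2 ≤ f.natDegree) :
    ∃ g h : R[X], f = g * h ∧ ¬ IsUnit g ∧ ¬ IsUnit h := by
  obtain ⟨h, rfl⟩ := dvd_iff_isRoot.mpr ha
  refine ⟨X - C a, h, rfl, not_isUnit_X_sub_C a, fun hh => ?_⟩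
  have hdeg_one : ((X - C a) * h).natDegree = 1 := by
    rw [(monic_X_sub_C a).natDegree_mul' hh.ne_zero, natDegree_X_sub_C,
      natDegree_eq_zero_of_isUnit hh]
  omega

section PadicInt

variable {p : ℕ} [Fact p.Prime]

theorem exists_aeval_eq_zero_of_norm_coeff_zero_lt {R : Type*} [CommSemiring R] [Algebra R ℤ_[p]]
    {f : R[X]}
    (hf : ‖algebraMap R ℤ_[p] (f.coeff 0)‖ < ‖algebraMap R ℤ_[p] (f.coeff 1)‖ ^ 2) :
    ∃ ϱ : ℤ_[p], aeval ϱ f = 0 := by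
  have hensel : ‖aeval (0 : ℤ_[p]) f‖ < ‖aeval (0 : ℤ_[p]) (derivative f)‖ ^ 2 := by
    simpa [← coeff_zero_eq_aeval_zero', coeff_derivative] using hf
  obtain ⟨ϱ, hϱ, -⟩ := hensels_lemma hensel
  exact ⟨ϱ, hϱ⟩

theorem norm_p_pow_lt_norm_p_pow_mul_sq {n m : ℕ} {u : ℤ_[p]} (hu : IsUnit u) (hnm : 2 * m < n) :
    ‖(p : ℤ_[p]) ^ n‖ < ‖(p : ℤ_[p]) ^ m * u‖ ^ 2 := by
  have norm_p_pos : 0 < ‖(p : ℤ_[p])‖ := norm_pos_iff.mpr PadicInt.prime_p.ne_zero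
  have norm_p_lt_one : ‖(p : ℤ_[p])‖ < 1 := PadicInt.not_isUnit_iff.mp PadicInt.p_nonunit
  calc ‖(p : ℤ_[p]) ^ n‖ = ‖(p : ℤ_[p])‖ ^ n := norm_pow _ _
    _ < ‖(p : ℤ_[p])‖ ^ (2 * m) := pow_lt_pow_right_of_lt_one₀ norm_p_pos norm_p_lt_one hnm
    _ = ‖(p : ℤ_[p]) ^ m * u‖ ^ 2 := by
      rw [norm_mul, PadicInt.isUnit_iff.mp hu, mul_one, norm_pow, ← pow_mul, mul_comm]

theorem isUnit_intCast_padicInt_iff {k : ℤ} : IsUnit (k : ℤ_[p]) ↔ ¬ (p : ℤ) ∣ k := by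
  rw [← PadicInt.norm_intCast_lt_one_iff, ← PadicInt.not_isUnit_iff, not_not]

theorem root_and_reducible_in_padic_of_n_gt_two_mul_m_general {R : Type*} [CommSemiring R]
    [Algebra R ℤ_[p]] [FaithfulSMul R ℤ_[p]] {f : R[X]} (hdeg : 2 ≤ f.natDegree)
    (hf : ‖algebraMap R ℤ_[p] (f.coeff 0)‖ < ‖algebraMap R ℤ_[p] (f.coeff 1)‖ ^ 2) :
    (∃ ϱ : ℤ_[p], aeval ϱ f = 0) ∧
      ∃ g h : ℤ_[p][X], f.map (algebraMap R ℤ_[p]) = g * h ∧ ¬ IsUnit g ∧ ¬ IsUnit h := by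
  obtain ⟨ϱ, hϱ⟩ := exists_aeval_eq_zero_of_norm_coeff_zero_lt hf
  have hroot : (f.map (algebraMap R ℤ_[p])).IsRoot ϱ := by
    rwa [IsRoot, eval_map_algebraMap]
  refine ⟨⟨ϱ, hϱ⟩, exists_eq_mul_not_isUnit_of_isRoot hroot ?_⟩
  rwa [natDegree_map_eq_of_injective (FaithfulSMul.algebraMap_injective R ℤ_[p])]

end PadicInt

/-- Let `f = p^n + p^m γ₁ x + γ₂ x² + ⋯ + γ_d x^d` with `d ≥ 2`, `γ_d ≠ 0`, `n ≥ 2`, `m ≥ 1`,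
`p ∤ γ₁`, and `p` not dividing all of `γ₂, …, γ_d`.  If `n > 2m`, then `f` has a root in `ℤ_p`;
in particular `f` is reducible in `ℤ_p[x]`. -/
theorem root_and_reducible_in_padic_of_n_gt_two_mul_m (p : ℕ) [hp : Fact p.Prime]
    (n m d : ℕ) (γ₁ : ℤ) (f : Polynomial ℤ) (hd : 2 ≤ d) (hdeg : f.natDegree = d)
    (hn : 2 ≤ n) (hm : 1 ≤ m)
    (h0 : f.coeff 0 = (p : ℤ) ^ n)
    (h1 : f.coeff 1 = (p : ℤ) ^ m * γ₁)
    (hγ₁ : ¬ (p : ℤ) ∣ γ₁)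
    (hhigh : ∃ i, 2 ≤ i ∧ i ≤ d ∧ ¬ (p : ℤ) ∣ f.coeff i)
    (hnm : 2 * m < n) :
    (∃ ϱ : ℤ_[p], Polynomial.aeval ϱ f = 0) ∧
      ∃ g h : Polynomial ℤ_[p],
        f.map (Int.castRingHom ℤ_[p]) = g * h ∧ ¬ IsUnit g ∧ ¬ IsUnit h := by
  refine root_and_reducible_in_padic_of_n_gt_two_mul_m_general (hdeg ▸ hd) ?_
  simpa [h0, h1] using norm_p_pow_lt_norm_p_pow_mul_sq (isUnit_intCast_padicInt_iff.mpr hγ₁) hnm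
end

section
/- Let p be a prime and f(x) = p^n + p^m γ₁ x + γ₂ x² + ⋯ + γ_d x^d a polynomial with integer coefficients, where d ≥ 2, γ_d ≠ 0, n ≥ 2, m ≥ 1, either p does not divide γ₁ or γ₁ = 0, and p does not divide all of γ₂, …, γ_d. Assume n ≤ 2m. If ϱ ∈ ℤ_p is a root of f with v_p(ϱ) = ℓ ≥ 1, then 2ℓ ≤ n and ℓ ≤ m. -/
/-!
If `π ^ m ∣ f.coeff 1` and `π ^ ℓ ∣ x`, then every nonconstant term of `f(x)` is divisible by
`π ^ min (m + ℓ) (2 * ℓ)`, and hence so is `f.coeff 0` when `x` is a root. If `n < 2 * ℓ`, then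
`n ≤ 2 * m` gives `n < m + ℓ` as well, so that `π ^ (n + 1) ∣ f.coeff 0`,
which fails for `f.coeff 0 = p ^ n` and `π = p` in `ℤ_[p]`.
-/

section

open Polynomial

theorem eval_eq_eval_divX_mul_add_coeff_zero {R : Type*} [Semiring R] (f : R[X]) (x : R) :
    f.eval x = f.divX.eval x * x + f.coeff 0 := by
  conv_lhs => rw [← f.divX_mul_X_add, eval_add, eval_mul_X, eval_C]

theorem dvd_coeff_zero_of_isRoot {R : Type*} [CommRing R] {f : R[X]} {x b : R}
    (hroot : f.IsRoot x) (hlinear : b ∣ f.coeff 1 * x) (hsq : b ∣ x ^ 2) :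
    b ∣ f.coeff 0 := by
  have expansion : f.divX.divX.eval x * x ^ 2 + f.coeff 1 * x + f.coeff 0 = 0 :=
    calc
      _ = (f.divX.divX.eval x * x + f.divX.coeff 0) * x + f.coeff 0 := by
        rw [coeff_divX]; ring
      _ = f.eval x := by
        rw [← eval_eq_eval_divX_mul_add_coeff_zero, ← eval_eq_eval_divX_mul_add_coeff_zero]
      _ = 0 := hroot
  have hhigher : b ∣ f.divX.divX.eval x * x ^ 2 + f.coeff 1 * x :=
    (hsq.mul_left _).add hlinear
  exact (dvd_add_right hhigher).mp (expansion ▸ dvd_zero b)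

theorem valuation_bounds_of_padic_root_general {R : Type*} [CommRing R] {f : R[X]} {π x : R}
    {n m ℓ : ℕ} (h0 : ¬ π ^ (n + 1) ∣ f.coeff 0) (h1 : π ^ m ∣ f.coeff 1) (hnm : n ≤ 2 * m)
    (hroot : f.IsRoot x) (hx : π ^ ℓ ∣ x) :
    2 * ℓ ≤ n ∧ ℓ ≤ m := by
  have hℓn : 2 * ℓ ≤ n := by
    by_contra! hlt
    have hlinear : π ^ (n + 1) ∣ f.coeff 1 * x :=
      (pow_dvd_pow π (by lia : n + 1 ≤ m + ℓ)).trans (pow_add π m ℓ ▸ mul_dvd_mul h1 hx)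
    have hsq : π ^ (n + 1) ∣ x ^ 2 :=
      (pow_dvd_pow π (by lia : n + 1 ≤ ℓ * 2)).trans (pow_mul π ℓ 2 ▸ pow_dvd_pow_of_dvd hx 2)
    exact h0 (dvd_coeff_zero_of_isRoot hroot hlinear hsq)
  exact ⟨hℓn, by lia⟩

end

theorem padicInt_pow_valuation_dvd {p : ℕ} [Fact p.Prime] (x : ℤ_[p]) :
    (p : ℤ_[p]) ^ x.valuation ∣ x := by
  rcases eq_or_ne x 0 with rfl | hx
  · exact dvd_zero _
  · exact Dvd.intro_left _ (PadicInt.unitCoeff_spec hx).symm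

/-- Let `f = p^n + p^m γ₁ x + γ₂ x² + ⋯ + γ_d x^d` with `d ≥ 2`, `γ_d ≠ 0`, `n ≥ 2`, `m ≥ 1`,
`p ∤ γ₁` or `γ₁ = 0`, `p` not dividing all of `γ₂, …, γ_d`, and `n ≤ 2m`.  If `ϱ ∈ ℤ_p` is a
root of `f` with `v_p(ϱ) = ℓ ≥ 1`, then `2ℓ ≤ n` and `ℓ ≤ m`. -/
theorem valuation_bounds_of_padic_root (p : ℕ) [hp : Fact p.Prime]
    (n m d : ℕ) (γ₁ : ℤ) (f : Polynomial ℤ) (hd : 2 ≤ d) (hdeg : f.natDegree = d)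
    (hn : 2 ≤ n) (hm : 1 ≤ m)
    (h0 : f.coeff 0 = (p : ℤ) ^ n)
    (h1 : f.coeff 1 = (p : ℤ) ^ m * γ₁)
    (hγ₁ : ¬ (p : ℤ) ∣ γ₁ ∨ γ₁ = 0)
    (hhigh : ∃ i, 2 ≤ i ∧ i ≤ d ∧ ¬ (p : ℤ) ∣ f.coeff i)
    (hnm : n ≤ 2 * m)
    (ϱ : ℤ_[p]) (hroot : Polynomial.aeval ϱ f = 0)
    (ℓ : ℕ) (hℓ : 1 ≤ ℓ) (hval : ϱ.valuation = (ℓ : ℤ)) :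
    2 * ℓ ≤ n ∧ ℓ ≤ m := by
  obtain rfl : ϱ.valuation = ℓ := by exact_mod_cast hval
  refine valuation_bounds_of_padic_root_general (f := f.map (algebraMap ℤ ℤ_[p])) ?_ ?_ hnm
    (by rwa [Polynomial.IsRoot, Polynomial.eval_map_algebraMap]) (padicInt_pow_valuation_dvd ϱ)
  · simp [h0, pow_dvd_pow_iff PadicInt.prime_p.ne_zero PadicInt.prime_p.not_isUnit]
  · simp [h1]
end

section
/- Let p be a prime and f(x) = p^n + p^m γ₁ x + γ₂ x² + γ₃ x³ a cubic polynomial with integer coefficients, where γ₃ ≠ 0, n ≥ 2, m ≥ 1, either p does not divide γ₁ or γ₁ = 0, and p does not divide both γ₂ and γ₃. Assume n ≤ 2m. If ϱ ∈ ℤ_p is a multiple root of f (i.e., f(ϱ) = 0 and f′(ϱ) = 0), then p divides ϱ, i.e., v_p(ϱ) ≥ 1. -/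
/-!
Modulo `p` the polynomial reduces to `X² (γ₂ + γ₃ X)`, which is nonzero. Away from `0`, a nonzero
polynomial `X ^ k (c + d X)` over a domain has the same multiple roots as its linear factor
`c + d X`, hence none at all. So every multiple root reduces to `0` modulo `p`.
-/

open Polynomial

lemma eq_zero_of_binomial_multiple_root {K : Type*} [CommRing K] [NoZeroDivisors K] {k : ℕ}
    {c d x : K} (hx : x ≠ 0) (hroot : (C c * X ^ k + C d * X ^ (k + 1)).eval x = 0)
    (hroot' : (derivative (C c * X ^ k + C d * X ^ (k + 1))).eval x = 0) :
    c = 0 ∧ d = 0 := by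
  have pow_pred_mul : (k : K) * (x ^ (k - 1) * x) = k * x ^ k := by cases k <;> simp [pow_succ]
  replace hroot : c * x ^ k + d * x ^ (k + 1) = 0 := by simpa using hroot
  have euler : k * (c * x ^ k) + (k + 1) * (d * x ^ (k + 1)) = 0 := by
    have : c * (k * x ^ (k - 1)) + d * ((k + 1) * x ^ k) = 0 := by
      simpa [derivative_X_pow] using hroot'
    linear_combination x * this - c * pow_pred_mul
  have hc : c * x ^ k = 0 := by linear_combination (k + 1) * hroot - euler
  have hd : d * x ^ (k + 1) = 0 := by linear_combination euler - k * hroot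
  exact ⟨(mul_eq_zero.1 hc).resolve_right (pow_ne_zero _ hx),
    (mul_eq_zero.1 hd).resolve_right (pow_ne_zero _ hx)⟩

section Reduction

variable {A S : Type*} [CommRing A] [CommRing S] [Algebra A S]

lemma mem_of_multiple_root_of_map_eq_binomial {P : Ideal S} [P.IsPrime] {f : A[X]} {k : ℕ}
    {c d : S ⧸ P} (hf : f.map (algebraMap A (S ⧸ P)) = C c * X ^ k + C d * X ^ (k + 1))
    (hcd : ¬ (c = 0 ∧ d = 0)) {x : S} (hroot : aeval x f = 0)
    (hroot' : aeval x (derivative f) = 0) : x ∈ P := by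
  have eval_map_mk {g : A[X]} (hg : aeval x g = 0) :
      (g.map (algebraMap A (S ⧸ P))).eval (Ideal.Quotient.mk P x) = 0 := by
    rw [eval_map_algebraMap, ← Ideal.Quotient.algebraMap_eq, aeval_algebraMap_apply, hg, map_zero]
  rw [← Ideal.Quotient.eq_zero_iff_mem]
  by_contra hx
  refine hcd (eq_zero_of_binomial_multiple_root (k := k) hx ?_ ?_)
  · rw [← hf, eval_map_mk hroot]
  · rw [← hf, derivative_map, eval_map_mk hroot']

lemma prime_dvd_of_cubic_multiple_root {π : S} (hπ : Prime π) {a b c d : A}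
    (ha : π ∣ algebraMap A S a) (hb : π ∣ algebraMap A S b)
    (hcd : ¬ (π ∣ algebraMap A S c ∧ π ∣ algebraMap A S d)) {x : S}
    (hroot : aeval x (C a + C b * X + C c * X ^ 2 + C d * X ^ 3) = 0)
    (hroot' : aeval x (derivative (C a + C b * X + C c * X ^ 2 + C d * X ^ 3)) = 0) : π ∣ x := by
  have : (Ideal.span {π}).IsPrime := (Ideal.span_singleton_prime hπ.ne_zero).2 hπ
  have algebraMap_eq_zero (r : A) :
      algebraMap A (S ⧸ Ideal.span {π}) r = 0 ↔ π ∣ algebraMap A S r := by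
    rw [IsScalarTower.algebraMap_apply A S, Ideal.Quotient.algebraMap_eq,
      Ideal.Quotient.eq_zero_iff_dvd]
  rw [← Ideal.mem_span_singleton]
  refine mem_of_multiple_root_of_map_eq_binomial (k := 2) (c := algebraMap A _ c)
    (d := algebraMap A _ d) ?_ ?_ hroot hroot'
  · simp [(algebraMap_eq_zero a).2 ha, (algebraMap_eq_zero b).2 hb]
  · rwa [algebraMap_eq_zero, algebraMap_eq_zero]

end Reduction

section PadicInt

variable {p : ℕ} [Fact p.Prime]

lemma padicInt_dvd_intCast_iff {z : ℤ} : (p : ℤ_[p]) ∣ z ↔ (p : ℤ) ∣ z := by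
  simpa using PadicInt.pow_p_dvd_int_iff 1 z

lemma padicInt_one_le_valuation_iff_dvd {x : ℤ_[p]} (hx : x ≠ 0) :
    1 ≤ x.valuation ↔ (p : ℤ_[p]) ∣ x := by
  simpa [Ideal.mem_span_singleton] using (PadicInt.mem_span_pow_iff_le_valuation x hx 1).symm

theorem cubic_multiple_root_divisible_general {A : Type*} [CommRing A] [Algebra A ℤ_[p]]
    {a b c d : A} (ha₀ : algebraMap A ℤ_[p] a ≠ 0) (ha : (p : ℤ_[p]) ∣ algebraMap A ℤ_[p] a)
    (hb : (p : ℤ_[p]) ∣ algebraMap A ℤ_[p] b)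
    (hcd : ¬ ((p : ℤ_[p]) ∣ algebraMap A ℤ_[p] c ∧ (p : ℤ_[p]) ∣ algebraMap A ℤ_[p] d))
    {f : A[X]} (hf : f = C a + C b * X + C c * X ^ 2 + C d * X ^ 3) {ϱ : ℤ_[p]}
    (hroot : aeval ϱ f = 0) (hroot' : aeval ϱ (derivative f) = 0) :
    (p : ℤ_[p]) ∣ ϱ ∧ 1 ≤ ϱ.valuation := by
  subst hf
  have hϱ : ϱ ≠ 0 := by
    rintro rfl
    exact ha₀ (by simpa using hroot)
  have hdvd := prime_dvd_of_cubic_multiple_root PadicInt.prime_p ha hb hcd hroot hroot'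
  exact ⟨hdvd, (padicInt_one_le_valuation_iff_dvd hϱ).2 hdvd⟩

end PadicInt

/-- Let `f = p^n + p^m γ₁ x + γ₂ x² + γ₃ x³` with `γ₃ ≠ 0`, `n ≥ 2`, `m ≥ 1`, `p ∤ γ₁` or
`γ₁ = 0`, `p` not dividing both `γ₂` and `γ₃`, and `n ≤ 2m`.  If `ϱ ∈ ℤ_p` is a multiple root
of `f`, then `p ∣ ϱ`, i.e. `v_p(ϱ) ≥ 1`. -/
theorem cubic_multiple_root_divisible (p : ℕ) [hp : Fact p.Prime]
    (n m : ℕ) (γ₁ γ₂ γ₃ : ℤ) (hγ₃ : γ₃ ≠ 0)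
    (hn : 2 ≤ n) (hm : 1 ≤ m)
    (hγ₁ : ¬ (p : ℤ) ∣ γ₁ ∨ γ₁ = 0)
    (hγ₂₃ : ¬ ((p : ℤ) ∣ γ₂ ∧ (p : ℤ) ∣ γ₃))
    (hnm : n ≤ 2 * m)
    (f : Polynomial ℤ)
    (hf : f = C ((p : ℤ) ^ n) + C ((p : ℤ) ^ m * γ₁) * X + C γ₂ * X ^ 2 + C γ₃ * X ^ 3)
    (ϱ : ℤ_[p]) (hroot : Polynomial.aeval ϱ f = 0)
    (hroot' : Polynomial.aeval ϱ (Polynomial.derivative f) = 0) :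
    (p : ℤ_[p]) ∣ ϱ ∧ 1 ≤ ϱ.valuation := by
  have hpn : (p : ℤ_[p]) ∣ (p : ℤ_[p]) ^ n := dvd_pow_self _ (by lia)
  have hpm : (p : ℤ_[p]) ∣ (p : ℤ_[p]) ^ m := dvd_pow_self _ (by lia)
  exact cubic_multiple_root_divisible_general (by simp [hp.out.ne_zero]) (by simpa using hpn)
    (by simpa using hpm.mul_right _) (by simpa [padicInt_dvd_intCast_iff] using hγ₂₃) hf
    hroot hroot'
end

section
/- Let p be a prime and f(x) = p^n + p^m γ₁ x + γ₂ x² + γ₃ x³ a cubic polynomial with integer coefficients, where γ₃ ≠ 0, n ≥ 2, m ≥ 1, either p does not divide γ₁ or γ₁ = 0, and p does not divide both γ₂ and γ₃. Assume n ≤ 2m. If f has a multiple root ϱ ∈ ℤ_p (i.e., f(ϱ) = 0 and f′(ϱ) = 0) with v_p(ϱ) = ℓ, then ℓ ≥ 1, ℓ ≤ m, 2ℓ ≤ n, and there exists a nonzero integer a dividing γ₃ such that ϱ = −p^ℓ/a in ℚ_p and f(x) = (p^ℓ + a x)·(p^{n−ℓ} + (p^{m−ℓ} γ₁ − p^{n−2ℓ}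 a) x + (γ₃/a) x²) as polynomials in ℤ[x]; in particular this is a proper factorization of f in ℤ[[x]]. -/
/-!
A multiple root of a polynomial of degree at most `3` over a perfect field is rational, because the
square of its minimal polynomial divides the polynomial. Hence `ϱ` is rational. Its numerator
divides `p ^ n`, so `ϱ = -p ^ ℓ / a` in lowest terms, and Gauss's lemma gives
`f = (p ^ ℓ + a x) ^ 2 (w + u x)` over `ℤ`. Comparing coefficients gives `w = p ^ (n - 2ℓ)` and the
remaining factor. If `ℓ = 0`, the constant and linear coefficients force `p ∣ w` and `p ∣ u`, so
that `p` divides all coefficients of `f`, which is excluded.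
-/

open Polynomial

lemma minpoly_sq_dvd_of_aeval_derivative_eq_zero {K L : Type*} [Field K] [CommRing L] [IsDomain L]
    [Algebra K L] {x : L} (hx : IsSeparable K x) {f : K[X]} (hf : aeval x f = 0)
    (hf' : aeval x (derivative f) = 0) : minpoly K x ^ 2 ∣ f := by
  obtain ⟨g, rfl⟩ := minpoly.dvd K x hf
  have hg : aeval x g = 0 := by
    have hprod : aeval x (derivative (minpoly K x)) * aeval x g = 0 := by
      simpa [derivative_mul] using hf'
    exact (mul_eq_zero.1 hprod).resolve_left
      (Separable.aeval_derivative_ne_zero hx (minpoly.aeval K x))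
  rw [sq]
  exact mul_dvd_mul_left _ (minpoly.dvd K x hg)

lemma exists_algebraMap_eq_and_X_sub_C_sq_dvd {K L : Type*} [Field K] [PerfectField K] [CommRing L]
    [IsDomain L] [Algebra K L] {f : K[X]} (hf₀ : f ≠ 0) (hdeg : f.natDegree ≤ 3) {x : L}
    (hf : aeval x f = 0) (hf' : aeval x (derivative f) = 0) :
    ∃ q : K, algebraMap K L q = x ∧ (X - C q) ^ 2 ∣ f := by
  have hint : IsIntegral K x := IsAlgebraic.isIntegral ⟨f, hf₀, hf⟩
  have hdvd : minpoly K x ^ 2 ∣ f := minpoly_sq_dvd_of_aeval_derivative_eq_zero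
    (PerfectField.separable_of_irreducible (minpoly.irreducible hint)) hf hf'
  have hdeg_minpoly : (minpoly K x).natDegree = 1 := by
    have hle := natDegree_le_of_dvd hdvd hf₀
    rw [natDegree_pow] at hle
    have hpos := minpoly.natDegree_pos hint
    omega
  obtain ⟨q, rfl⟩ := minpoly.natDegree_eq_one_iff.1 hdeg_minpoly
  exact ⟨q, rfl, minpoly.eq_X_sub_C L q ▸ hdvd⟩

lemma isPrimitive_C_add_C_mul_X {R : Type*} [CommSemiring R] {r a : R} (hra : IsRelPrime r a) :
    (C r + C a * X).IsPrimitive := by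
  intro c hc
  rw [C_dvd_iff_dvd_coeff] at hc
  exact hra (by simpa using hc 0) (by simpa using hc 1)

lemma isPrimitive_pow {R : Type*} [CommRing R] [IsDomain R] [IsGCDMonoid R] {f : R[X]}
    (hf : f.IsPrimitive) (k : ℕ) : (f ^ k).IsPrimitive := by
  let : NormalizedGCDMonoid R := Nonempty.some inferInstance
  induction k with
  | zero => simp [isPrimitive_one]
  | succ k ih => exact pow_succ f k ▸ ih.mul hf

lemma C_add_C_mul_X_pow_dvd_of_X_sub_C_pow_dvd_map {R K : Type*} [CommRing R] [IsDomain R]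
    [IsGCDMonoid R] [Field K] [Algebra R K] [IsFractionRing R K] {f : R[X]} {r a : R} {k : ℕ}
    (ha : a ≠ 0) (hra : IsRelPrime r a)
    (h : (X - C (-algebraMap R K r / algebraMap R K a)) ^ k ∣ f.map (algebraMap R K)) :
    (C r + C a * X) ^ k ∣ f := by
  have haK : algebraMap R K a ≠ 0 := by simpa using ha
  have hmap : (C r + C a * X).map (algebraMap R K) =
      C (algebraMap R K a) * (X - C (-algebraMap R K r / algebraMap R K a)) := by
    rw [mul_sub, ← C_mul, mul_div_cancel₀ _ haK]
    simp [add_comm]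
  rw [(isPrimitive_pow (isPrimitive_C_add_C_mul_X hra) k).dvd_iff_fraction_map_dvd_fraction_map K,
    Polynomial.map_pow, hmap, mul_pow]
  exact (((IsUnit.mk0 _ haK).map C).pow k).mul_left_dvd.2 h

lemma natAbs_num_eq_prime_pow {p n ℓ : ℕ} [Fact p.Prime] {q : ℚ} (hq : q.num ∣ (p : ℤ) ^ n)
    (hval : padicValRat p q = ℓ) : q.num.natAbs = p ^ ℓ := by
  have hp : p.Prime := Fact.out
  obtain ⟨k, -, hk⟩ : ∃ k ≤ n, q.num.natAbs = p ^ k := by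
    rw [← Nat.dvd_prime_pow hp, ← Int.natAbs_natCast (p ^ n), Int.natAbs_dvd_natAbs]
    exact_mod_cast hq
  have hval_num : padicValInt p q.num = k := by rw [padicValInt, hk, padicValNat.prime_pow]
  rw [padicValRat_def, hval_num] at hval
  have hval_den : padicValNat p q.den = 0 := by
    rcases Nat.eq_zero_or_pos k with rfl | hkpos
    · omega
    · have hcop := q.reduced
      rw [hk, Nat.coprime_pow_left_iff hkpos, hp.coprime_iff_not_dvd] at hcop
      exact padicValNat.eq_zero_of_not_dvd hcop
  rw [hk]
  congr 1
  omega

lemma exists_eq_neg_prime_pow_div {p n ℓ : ℕ} [Fact p.Prime] {q : ℚ} (hq : q.num ∣ (p : ℤ) ^ n)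
    (hval : padicValRat p q = ℓ) :
    ∃ a : ℤ, a ≠ 0 ∧ IsCoprime ((p : ℤ) ^ ℓ) a ∧ q = -(p : ℚ) ^ ℓ / a := by
  have hnum := natAbs_num_eq_prime_pow hq hval
  have hcop : IsCoprime ((p : ℤ) ^ ℓ) q.den := by
    have hred := q.reduced
    rw [hnum] at hred
    exact_mod_cast Nat.isCoprime_iff_coprime.2 hred
  rcases Int.natAbs_eq q.num with h | h <;> rw [hnum] at h
  · refine ⟨-q.den, by simp, hcop.neg_right, ?_⟩
    nth_rw 1 [← q.num_div_den, h]
    push_cast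
    rw [neg_div_neg_eq]
  · refine ⟨q.den, by simp, hcop, ?_⟩
    nth_rw 1 [← q.num_div_den, h]
    push_cast
    rfl

lemma exists_prime_pow_add_C_mul_X_sq_dvd {p n : ℕ} [Fact p.Prime] {f : ℤ[X]}
    (hdeg : f.natDegree ≤ 3) (hcoeff : f.coeff 0 = (p : ℤ) ^ n) {ϱ : ℤ_[p]}
    (hroot : aeval ϱ f = 0) (hroot' : aeval ϱ (derivative f) = 0) :
    ∃ a : ℤ, a ≠ 0 ∧ (ϱ : ℚ_[p]) = -(p : ℚ_[p]) ^ ϱ.valuation / a ∧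
      (C ((p : ℤ) ^ ϱ.valuation) + C a * X) ^ 2 ∣ f := by
  have hf₀ : f ≠ 0 := by
    rintro rfl
    exact pow_ne_zero n (NeZero.ne (p : ℤ)) (by simpa using hcoeff.symm)
  have haeval {g : ℤ[X]} (hg : aeval ϱ g = 0) :
      aeval (ϱ : ℚ_[p]) (g.map (algebraMap ℤ ℚ)) = 0 := by
    rw [aeval_map_algebraMap]
    exact (aeval_algebraMap_apply ℚ_[p] ϱ g).trans (by rw [hg, map_zero])
  obtain ⟨q, hqϱ, hq⟩ : ∃ q : ℚ, (q : ℚ_[p]) = ϱ ∧ (X - C q) ^ 2 ∣ f.map (algebraMap ℤ ℚ) :=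
    exists_algebraMap_eq_and_X_sub_C_sq_dvd
      ((Polynomial.map_ne_zero_iff (algebraMap ℤ ℚ).injective_int).2 hf₀)
      (natDegree_map_le.trans hdeg) (haeval hroot)
      (by simpa only [derivative_map] using haeval hroot')
  have hnum : q.num ∣ (p : ℤ) ^ n := by
    have hq₀ : aeval q f = 0 := by
      rw [← aeval_map_algebraMap ℚ, coe_aeval_eq_eval, ← IsRoot.def, ← dvd_iff_isRoot]
      exact (dvd_pow_self _ two_ne_zero).trans hq
    exact hcoeff ▸ q.isFractionRingNum.dvd_iff_dvd_left.1 (num_dvd_of_is_root hq₀)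
  have hval : padicValRat p q = ϱ.valuation := by
    rw [← Padic.valuation_ratCast, hqϱ, PadicInt.valuation_coe]
  obtain ⟨a, ha, hcop, rfl⟩ := exists_eq_neg_prime_pow_div hnum hval
  refine ⟨a, ha, by rw [← hqϱ]; push_cast; rfl, ?_⟩
  exact C_add_C_mul_X_pow_dvd_of_X_sub_C_pow_dvd_map (K := ℚ) ha hcop.isRelPrime
    (by simpa using hq)

lemma exists_cubic_eq_of_C_add_C_mul_X_sq_dvd_toPoly {R : Type*} [CommRing R]
    [NoZeroDivisors R] {P : Cubic R} {r a : R} (ha : a ≠ 0) (h : (C r + C a * X) ^ 2 ∣ P.toPoly) :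
    ∃ u w : R,
      P = ⟨a ^ 2 * u, a ^ 2 * w + 2 * r * a * u, r ^ 2 * u + 2 * r * a * w, r ^ 2 * w⟩ := by
  obtain ⟨g, hg⟩ := h
  have hdeg : g.natDegree ≤ 1 := by
    rcases eq_or_ne g 0 with rfl | hg₀
    · simp
    have hlin : (C r + C a * X).natDegree = 1 := by rw [add_comm, natDegree_linear ha]
    have hlin₀ : C r + C a * X ≠ 0 := ne_zero_of_natDegree_gt (hlin ▸ one_pos)
    have hdeg_mul := congrArg natDegree hg
    rw [natDegree_mul (pow_ne_zero 2 hlin₀) hg₀, natDegree_pow, hlin] at hdeg_mul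
    have hdeg_le : P.toPoly.natDegree ≤ 3 := natDegree_cubic_le
    omega
  obtain ⟨u, w, rfl⟩ := exists_eq_X_add_C_of_natDegree_le_one hdeg
  refine ⟨u, w, (Cubic.toPoly_injective _ _).1 (hg.trans ?_)⟩
  simp only [Cubic.toPoly, C_add, C_mul, C_pow, C_ofNat]
  ring

lemma dvd_and_dvd_of_isCoprime {R : Type*} [CommRing R] {d r a u w : R} (hdr : IsCoprime d r)
    (h₀ : d ∣ r ^ 2 * w) (h₁ : d ∣ r ^ 2 * u + 2 * r * a * w) : d ∣ u ∧ d ∣ w := by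
  have hw : d ∣ w := hdr.pow_right.dvd_of_dvd_mul_left h₀
  exact ⟨hdr.pow_right.dvd_of_dvd_mul_left ((dvd_add_left (hw.mul_left _)).1 h₁), hw⟩

lemma le_and_eq_pow_sub_of_pow_eq_pow_mul {M : Type*} [CommMonoidWithZero M] [IsCancelMulZero M]
    {p w : M} (hp : Prime p) {k n : ℕ} (h : p ^ n = p ^ k * w) : k ≤ n ∧ w = p ^ (n - k) := by
  have hkn : k ≤ n := (pow_dvd_pow_iff hp.ne_zero hp.not_isUnit).1 ⟨w, h⟩
  exact ⟨hkn, mul_left_cancel₀ (pow_ne_zero k hp.ne_zero) (by rw [← h, pow_mul_pow_sub _ hkn])⟩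

lemma isUnit_coe_powerSeries_iff {R : Type*} [CommRing R] {g : R[X]} :
    IsUnit (g : PowerSeries R) ↔ IsUnit (g.coeff 0) := by
  rw [PowerSeries.isUnit_iff_constantCoeff, constantCoeff_coe]

theorem cubic_multiple_root_factorization_general (p : ℕ) [Fact p.Prime] (n : ℕ) (c₁ c₂ c₃ : ℤ)
    (hn : n ≠ 0) (hc₁ : (p : ℤ) ∣ c₁) (hc₂₃ : ¬ ((p : ℤ) ∣ c₂ ∧ (p : ℤ) ∣ c₃)) (f : ℤ[X])
    (hf : f = C ((p : ℤ) ^ n) + C c₁ * X + C c₂ * X ^ 2 + C c₃ * X ^ 3)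
    (ϱ : ℤ_[p]) (hroot : aeval ϱ f = 0) (hroot' : aeval ϱ (derivative f) = 0)
    (ℓ : ℕ) (hval : ϱ.valuation = ℓ) :
    1 ≤ ℓ ∧ 2 * ℓ ≤ n ∧ (p : ℤ) ^ ℓ ∣ c₁ ∧
      ∃ a : ℤ, a ≠ 0 ∧ a ∣ c₃ ∧
        (ϱ : ℚ_[p]) = -(p : ℚ_[p]) ^ ℓ / (a : ℚ_[p]) ∧
        f = (C ((p : ℤ) ^ ℓ) + C a * X) *
            (C ((p : ℤ) ^ (n - ℓ)) + C (c₁ / (p : ℤ) ^ ℓ - (p : ℤ) ^ (n - 2 * ℓ) * a) * X +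
              C (c₃ / a) * X ^ 2) ∧
        ¬ IsUnit ((C ((p : ℤ) ^ ℓ) + C a * X : ℤ[X]) : PowerSeries ℤ) ∧
        ¬ IsUnit ((C ((p : ℤ) ^ (n - ℓ)) +
            C (c₁ / (p : ℤ) ^ ℓ - (p : ℤ) ^ (n - 2 * ℓ) * a) * X +
            C (c₃ / a) * X ^ 2 : ℤ[X]) : PowerSeries ℤ) := by
  have hp : Prime (p : ℤ) := Nat.prime_iff_prime_int.1 Fact.out
  have hfP : f = (⟨c₃, c₂, c₁, (p : ℤ) ^ n⟩ : Cubic ℤ).toPoly := by rw [hf, Cubic.toPoly]; ring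
  obtain ⟨a, ha, hϱ, hdvd⟩ := exists_prime_pow_add_C_mul_X_sq_dvd (n := n)
    (hfP ▸ natDegree_cubic_le) (by rw [hfP, Cubic.coeff_eq_d]) hroot hroot'
  rw [hval] at hϱ hdvd
  obtain ⟨u, w, hP⟩ := exists_cubic_eq_of_C_add_C_mul_X_sq_dvd_toPoly ha (hfP ▸ hdvd)
  obtain ⟨rfl, rfl, rfl, hpn⟩ := Cubic.mk.inj hP
  have hℓ : 1 ≤ ℓ := by
    by_contra! hℓ₀
    have hcop : IsCoprime (p : ℤ) (p ^ ℓ) := by simp [Nat.lt_one_iff.1 hℓ₀, isCoprime_one_right]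
    obtain ⟨hu, hw⟩ := dvd_and_dvd_of_isCoprime hcop (hpn ▸ dvd_pow_self _ hn) hc₁
    exact hc₂₃ ⟨dvd_add (hw.mul_left _) (hu.mul_left _), hu.mul_left _⟩
  obtain ⟨h2ℓ, hw⟩ := le_and_eq_pow_sub_of_pow_eq_pow_mul hp
    (show (p : ℤ) ^ n = p ^ (2 * ℓ) * w by rw [hpn, pow_right_comm, pow_mul])
  have hpw : (p : ℤ) ^ (n - ℓ) = (p : ℤ) ^ ℓ * w := by
    rw [hw, ← pow_add]
    congr 1
    omega
  have hlin : (p : ℤ) ^ ℓ * (p ^ ℓ * u + 2 * a * w) = (p ^ ℓ) ^ 2 * u + 2 * p ^ ℓ * a * w := by ring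
  have hnot_unit {k : ℕ} (hk : k ≠ 0) : ¬ IsUnit ((p : ℤ) ^ k) :=
    (isUnit_pow_iff hk).not.2 hp.not_isUnit
  refine ⟨hℓ, h2ℓ, ⟨_, hlin.symm⟩, a, ha, ⟨a * u, by ring⟩, hϱ, ?_, ?_, ?_⟩
  · rw [hf, hpn, ← hw, hpw, ← hlin, Int.mul_ediv_cancel_left _ (pow_ne_zero ℓ hp.ne_zero),
      sq a, mul_assoc a a u, Int.mul_ediv_cancel_left _ ha]
    simp only [C_add, C_sub, C_mul, C_pow, C_ofNat]
    ring
  · rw [isUnit_coe_powerSeries_iff, coeff_zero_eq_eval_zero]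
    simpa using hnot_unit (k := ℓ) (by omega)
  · rw [isUnit_coe_powerSeries_iff, coeff_zero_eq_eval_zero]
    simpa using hnot_unit (k := n - ℓ) (by omega)

/-- Let `f = p^n + p^m γ₁ x + γ₂ x² + γ₃ x³` with `γ₃ ≠ 0`, `n ≥ 2`, `m ≥ 1`, `p ∤ γ₁` or
`γ₁ = 0`, `p` not dividing both `γ₂` and `γ₃`, and `n ≤ 2m`.  If `f` has a multiple root
`ϱ ∈ ℤ_p` with `v_p(ϱ) = ℓ`, then `ℓ ≥ 1`, `ℓ ≤ m`, `2ℓ ≤ n`, and there is a nonzero divisor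
`a` of `γ₃` with `ϱ = -p^ℓ/a` such that
`f = (p^ℓ + a x) (p^(n-ℓ) + (p^(m-ℓ) γ₁ - p^(n-2ℓ) a) x + (γ₃/a) x²)`, a proper factorization
of `f` in `ℤ[[x]]`. -/
theorem cubic_multiple_root_factorization (p : ℕ) [hp : Fact p.Prime]
    (n m : ℕ) (γ₁ γ₂ γ₃ : ℤ) (hγ₃ : γ₃ ≠ 0)
    (hn : 2 ≤ n) (hm : 1 ≤ m)
    (hγ₁ : ¬ (p : ℤ) ∣ γ₁ ∨ γ₁ = 0)
    (hγ₂₃ : ¬ ((p : ℤ) ∣ γ₂ ∧ (p : ℤ) ∣ γ₃))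
    (hnm : n ≤ 2 * m)
    (f : Polynomial ℤ)
    (hf : f = C ((p : ℤ) ^ n) + C ((p : ℤ) ^ m * γ₁) * X + C γ₂ * X ^ 2 + C γ₃ * X ^ 3)
    (ϱ : ℤ_[p]) (hroot : Polynomial.aeval ϱ f = 0)
    (hroot' : Polynomial.aeval ϱ (Polynomial.derivative f) = 0)
    (ℓ : ℕ) (hval : ϱ.valuation = (ℓ : ℤ)) :
    1 ≤ ℓ ∧ ℓ ≤ m ∧ 2 * ℓ ≤ n ∧
      ∃ a : ℤ, a ≠ 0 ∧ a ∣ γ₃ ∧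
        (ϱ : ℚ_[p]) = -(p : ℚ_[p]) ^ ℓ / (a : ℚ_[p]) ∧
        f = (C ((p : ℤ) ^ ℓ) + C a * X) *
            (C ((p : ℤ) ^ (n - ℓ)) +
              C ((p : ℤ) ^ (m - ℓ) * γ₁ - (p : ℤ) ^ (n - 2 * ℓ) * a) * X +
              C (γ₃ / a) * X ^ 2) ∧
        ¬ IsUnit ((C ((p : ℤ) ^ ℓ) + C a * X : Polynomial ℤ) : PowerSeries ℤ) ∧
        ¬ IsUnit ((C ((p : ℤ) ^ (n - ℓ)) +
            C ((p : ℤ) ^ (m - ℓ) * γ₁ - (p : ℤ) ^ (n - 2 * ℓ) * a) * X +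
            C (γ₃ / a) * X ^ 2 : Polynomial ℤ) : PowerSeries ℤ) := by
  obtain ⟨hℓ, h2ℓ, -, hfactor⟩ := cubic_multiple_root_factorization_general p n (p ^ m * γ₁) γ₂ γ₃
    (by omega) (dvd_mul_of_dvd_left (dvd_pow_self _ (by omega)) γ₁) hγ₂₃ f hf ϱ hroot hroot' ℓ
    (by exact_mod_cast hval)
  have hℓm : ℓ ≤ m := by omega
  have hquot : (p : ℤ) ^ m * γ₁ / (p : ℤ) ^ ℓ = (p : ℤ) ^ (m - ℓ) * γ₁ := by
    rw [← pow_mul_pow_sub _ hℓm, mul_assoc, Int.mul_ediv_cancel_left _ (NeZero.ne _)]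
  exact ⟨hℓ, hℓm, h2ℓ, hquot ▸ hfactor⟩
end
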